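/- For every 3-by-3 reciprocal matrix A, the set of efficient vectors for A is closed under the (Hadamard) geometric mean: if w and v are positive 3-vectors efficient for A, then the vector with i-th entry (w_i·v_i)^{1/2} is efficient for A. -/

import Mathlib

/-- An n-by-n positive matrix is reciprocal if `A j i = 1 / A i j` for all `i, j`. -/
def Reciprocal {n : ℕ} (A : Matrix (Fin n) (Fin n) ℝ) : Prop :=
  (∀ i j, 0 < A i j) ∧ ∀ i j, A j i = 1 / A i j

/-- A positive vector `w` is efficient for a reciprocal matrix `A` if every positive
vector `v` with `|v i / v j - A i j| ≤ |w i / w j - A i j|` entrywise is a positive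
scalar multiple of `w`. -/
def Efficient {n : ℕ} (A : Matrix (Fin n) (Fin n) ℝ) (w : Fin n → ℝ) : Prop :=
  ∀ v : Fin n → ℝ, (∀ i, 0 < v i) →
    (∀ i j, |v i / v j - A i j| ≤ |w i / w j - A i j|) →
    ∃ c : ℝ, 0 < c ∧ v = fun i => c * w i

-- HELPERS
lemma abs_between {a b c : ℝ} (h : (c ≤ a ∧ a ≤ b) ∨ (b ≤ a ∧ a ≤ c)) :
    |a - c| ≤ |b - c| := by
  rcases h with ⟨h1, h2⟩ | ⟨h1, h2⟩
  · rw [abs_of_nonneg (by linarith), abs_of_nonneg (by linarith)]; linarith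
  · rw [abs_of_nonpos (by linarith), abs_of_nonpos (by linarith)]; linarith

lemma Efficient.rigid {A : Matrix (Fin 3) (Fin 3) ℝ} (hA : Reciprocal A)
    {w : Fin 3 → ℝ} (hw : ∀ i, 0 < w i) (he : Efficient A w) (j m : Fin 3) (hm : m ≠ j)
    {y : ℝ} (hy : 0 < y)
    (h : ∀ l, l ≠ j → (w j ≤ y ∧ y ≤ A j l * w l) ∨ (A j l * w l ≤ y ∧ y ≤ w j)) :
    y = w j := by
  obtain ⟨hp, hr⟩ := hA
  obtain ⟨c, hc, hcw⟩ := he (fun i => if i = j then y else w i)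
    (fun i => by split_ifs; exacts [hy, hw i]) (by
      intro a b
      by_cases ha : a = j <;> by_cases hb : b = j
      · subst ha; subst hb
        simp [(hw _).ne', hy.ne']
      · subst ha
        simp only [hb, if_true, if_false]
        apply abs_between
        have hwb := hw b
        rcases h b hb with ⟨h1, h2⟩ | ⟨h1, h2⟩
        · right
          exact ⟨by gcongr, by rwa [div_le_iff₀ hwb]⟩
        · left
          exact ⟨by rwa [le_div_iff₀ hwb], by gcongr⟩
      · subst hb
        simp only [ha, if_true, if_false]
        apply abs_between
        have hwa := hw a
        have hwb := hw b
        have hpa := hp b a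
        rw [hr b a]
        rcases h a ha with ⟨h1, h2⟩ | ⟨h1, h2⟩
        · left
          refine ⟨?_, by gcongr⟩
          rw [div_le_div_iff₀ hpa hy]; linarith
        · right
          refine ⟨by gcongr, ?_⟩
          rw [div_le_div_iff₀ hy hpa]; linarith
      · simp only [ha, hb, if_false]; exact le_rfl)
  have h1 := congrFun hcw m
  have h2 := congrFun hcw j
  simp only [hm, if_true, if_false] at h1 h2
  have : c = 1 := by
    have := hw m
    have h3 : (c - 1) * w m = 0 := by linarith
    rcases mul_eq_zero.mp h3 with h | h <;> linarith
  rw [h2, this, one_mul]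

lemma Efficient.local_sign {A : Matrix (Fin 3) (Fin 3) ℝ} (hA : Reciprocal A)
    {w : Fin 3 → ℝ} (hw : ∀ i, 0 < w i) (he : Efficient A w) (i j k : Fin 3) (hij : i ≠ j)
    (hall : ∀ l, l ≠ j → l = i ∨ l = k) :
    ¬ (A i j * w j < w i ∧ w j < A j k * w k) ∧ ¬ (w i < A i j * w j ∧ A j k * w k < w j) := by
  have hp := hA.1 i j
  have hr := hA.2 i j
  have hpj := hA.1 j i
  have e : A j i * w i - w j = A j i * (w i - A i j * w j) := by
    rw [hr]; field_simp
  constructor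
  · rintro ⟨h1, h2⟩
    have h3 : w j < A j i * w i := by
      have := mul_pos hpj (sub_pos.mpr h1)
      linarith
    have hlt : w j < min (A j i * w i) (A j k * w k) := lt_min h3 h2
    have := he.rigid hA hw j i hij ((hw j).trans hlt) (by
      intro l hl
      left
      refine ⟨hlt.le, ?_⟩
      rcases hall l hl with rfl | rfl
      · exact min_le_left _ _
      · exact min_le_right _ _)
    exact hlt.ne' this
  · rintro ⟨h1, h2⟩
    have h3 : A j i * w i < w j := by
      have := mul_pos hpj (sub_pos.mpr h1)
      linarith
    have hlt : max (A j i * w i) (A j k * w k) < w j := max_lt h3 h2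
    have := he.rigid hA hw j i hij (lt_max_of_lt_left (mul_pos hpj (hw i))) (by
      intro l hl
      right
      refine ⟨?_, hlt.le⟩
      rcases hall l hl with rfl | rfl
      · exact le_max_left _ _
      · exact le_max_right _ _)
    exact hlt.ne this

def UpCycle (A : Matrix (Fin 3) (Fin 3) ℝ) (w : Fin 3 → ℝ) : Prop :=
  A 0 1 * w 1 ≤ w 0 ∧ A 1 2 * w 2 ≤ w 1 ∧ A 2 0 * w 0 ≤ w 2

def DownCycle (A : Matrix (Fin 3) (Fin 3) ℝ) (w : Fin 3 → ℝ) : Prop :=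
  w 0 ≤ A 0 1 * w 1 ∧ w 1 ≤ A 1 2 * w 2 ∧ w 2 ≤ A 2 0 * w 0

lemma Efficient.cycle {A : Matrix (Fin 3) (Fin 3) ℝ} (hA : Reciprocal A)
    {w : Fin 3 → ℝ} (hw : ∀ i, 0 < w i) (he : Efficient A w) :
    UpCycle A w ∨ DownCycle A w := by
  have h1 := he.local_sign hA hw 0 1 2 (by decide) (by decide)
  have h2 := he.local_sign hA hw 1 2 0 (by decide) (by decide)
  have h3 := he.local_sign hA hw 2 0 1 (by decide) (by decide)
  unfold UpCycle DownCycle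
  grind

lemma UpCycle.prod_le {A : Matrix (Fin 3) (Fin 3) ℝ} (hA : Reciprocal A)
    {w : Fin 3 → ℝ} (hw : ∀ i, 0 < w i) (h : UpCycle A w) :
    A 0 1 * (A 1 2 * A 2 0) ≤ 1 := by
  obtain ⟨h1, h2, h3⟩ := h
  have p1 := hA.1 0 1
  have p2 := hA.1 1 2
  have a := mul_le_mul_of_nonneg_left h2 p1.le
  have b := mul_le_mul_of_nonneg_left h3 (mul_pos p1 p2).le
  refine le_of_mul_le_mul_right ?_ (hw 0)
  linarith

lemma DownCycle.up {A : Matrix (Fin 3) (Fin 3) ℝ} (hA : Reciprocal A)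
    {w : Fin 3 → ℝ} (hw : ∀ i, 0 < w i) (h : DownCycle A w)
    (hp : A 0 1 * (A 1 2 * A 2 0) ≤ 1) : UpCycle A w := by
  obtain ⟨h1, h2, h3⟩ := h
  have p1 := hA.1 0 1
  have p2 := hA.1 1 2
  have p3 := hA.1 2 0
  have a := mul_le_mul_of_nonneg_left h2 p1.le
  have b := mul_le_mul_of_nonneg_left h3 (mul_pos p1 p2).le
  have c := mul_le_mul_of_nonneg_right hp (hw 0).le
  refine ⟨by linarith, ?_, ?_⟩
  · refine le_of_mul_le_mul_left ?_ p1
    linarith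
  · refine le_of_mul_le_mul_left ?_ (mul_pos p1 p2)
    linarith

lemma eq_of_cycle {x y : Fin 3 → ℝ} (hx : ∀ i, 0 < x i) (hy : ∀ i, 0 < y i)
    (h1 : x 0 / x 1 ≤ y 0 / y 1) (h2 : x 1 / x 2 ≤ y 1 / y 2) (h3 : x 2 / x 0 ≤ y 2 / y 0) :
    ∃ c : ℝ, 0 < c ∧ x = fun i => c * y i := by
  have x0 := hx 0
  have x1 := hx 1
  have x2 := hx 2
  have y0 := hy 0
  have y1 := hy 1
  have y2 := hy 2
  -- r i = x i / y i satisfies r 0 ≤ r 1 ≤ r 2 ≤ r 0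
  have k1 : x 0 / y 0 ≤ x 1 / y 1 := by
    rw [div_le_div_iff₀ (by assumption) (by assumption)] at h1 ⊢; linarith
  have k2 : x 1 / y 1 ≤ x 2 / y 2 := by
    rw [div_le_div_iff₀ (by assumption) (by assumption)] at h2 ⊢; linarith
  have k3 : x 2 / y 2 ≤ x 0 / y 0 := by
    rw [div_le_div_iff₀ (by assumption) (by assumption)] at h3 ⊢; linarith
  refine ⟨x 0 / y 0, div_pos x0 y0, ?_⟩
  have e1 : x 0 / y 0 = x 1 / y 1 := by linarith
  have e2 : x 0 / y 0 = x 2 / y 2 := by linarith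
  funext i
  fin_cases i
  · show x 0 = x 0 / y 0 * y 0
    field_simp
  · show x 1 = x 0 / y 0 * y 1
    rw [e1]; field_simp
  · show x 2 = x 0 / y 0 * y 2
    rw [e2]; field_simp

lemma le_of_abs_up {a b c : ℝ} (h : |a - c| ≤ |b - c|) (hb : c ≤ b) : a ≤ b := by
  rw [abs_of_nonneg (sub_nonneg.mpr hb)] at h
  linarith [le_abs_self (a - c)]

lemma le_of_abs_down {a b c : ℝ} (h : |a - c| ≤ |b - c|) (hb : b ≤ c) : b ≤ a := by
  rw [abs_of_nonpos (sub_nonpos.mpr hb)] at h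
  linarith [neg_abs_le (a - c)]

lemma UpCycle.efficient {A : Matrix (Fin 3) (Fin 3) ℝ}
    {w : Fin 3 → ℝ} (hw : ∀ i, 0 < w i) (h : UpCycle A w) : Efficient A w := by
  intro x hx hle
  obtain ⟨h1, h2, h3⟩ := h
  exact eq_of_cycle hx hw
    (le_of_abs_up (hle 0 1) ((le_div_iff₀ (hw 1)).mpr h1))
    (le_of_abs_up (hle 1 2) ((le_div_iff₀ (hw 2)).mpr h2))
    (le_of_abs_up (hle 2 0) ((le_div_iff₀ (hw 0)).mpr h3))

lemma DownCycle.efficient {A : Matrix (Fin 3) (Fin 3) ℝ}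
    {w : Fin 3 → ℝ} (hw : ∀ i, 0 < w i) (h : DownCycle A w) : Efficient A w := by
  intro x hx hle
  obtain ⟨h1, h2, h3⟩ := h
  obtain ⟨c, hc, e⟩ := eq_of_cycle hw hx
    (le_of_abs_down (hle 0 1) ((div_le_iff₀ (hw 1)).mpr h1))
    (le_of_abs_down (hle 1 2) ((div_le_iff₀ (hw 2)).mpr h2))
    (le_of_abs_down (hle 2 0) ((div_le_iff₀ (hw 0)).mpr h3))
  refine ⟨c⁻¹, inv_pos.mpr hc, ?_⟩
  funext i
  rw [e]
  field_simp

lemma gm_up {a p q r s : ℝ} (ha : 0 < a) (hp : 0 < p) (hr : 0 < r)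
    (h1 : a * p ≤ q) (h2 : a * r ≤ s) :
    a * (p * r) ^ ((1 : ℝ) / 2) ≤ (q * s) ^ ((1 : ℝ) / 2) := by
  rw [← Real.sqrt_eq_rpow, ← Real.sqrt_eq_rpow]
  apply Real.le_sqrt_of_sq_le
  rw [mul_pow, Real.sq_sqrt (mul_pos hp hr).le]
  have := mul_le_mul h1 h2 (mul_pos ha hr).le ((mul_pos ha hp).le.trans h1)
  linarith

lemma gm_down {a p q r s : ℝ} (ha : 0 < a) (hp : 0 < p) (hr : 0 < r) (hs : 0 < s)
    (h1 : q ≤ a * p) (h2 : s ≤ a * r) :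
    (q * s) ^ ((1 : ℝ) / 2) ≤ a * (p * r) ^ ((1 : ℝ) / 2) := by
  rw [← Real.sqrt_eq_rpow, ← Real.sqrt_eq_rpow]
  apply Real.sqrt_le_iff.mpr
  refine ⟨by positivity, ?_⟩
  rw [mul_pow, Real.sq_sqrt (mul_pos hp hr).le]
  have := mul_le_mul h1 h2 hs.le (mul_pos ha hp).le
  linarith

/-- For 3-by-3 reciprocal matrices, the set of efficient vectors is closed under the
Hadamard geometric mean. -/
theorem stmt_13 (A : Matrix (Fin 3) (Fin 3) ℝ) (hA : Reciprocal A)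
    (w v : Fin 3 → ℝ) (hw : ∀ i, 0 < w i) (hv : ∀ i, 0 < v i)
    (hweff : Efficient A w) (hveff : Efficient A v) :
    Efficient A (fun i => (w i * v i) ^ ((1 : ℝ) / 2)) := by
  have hg : ∀ i, 0 < (fun i => (w i * v i) ^ ((1 : ℝ) / 2)) i := fun i =>
    Real.rpow_pos_of_pos (mul_pos (hw i) (hv i)) _
  have up : UpCycle A w → UpCycle A v →
      Efficient A (fun i => (w i * v i) ^ ((1 : ℝ) / 2)) := by
    rintro ⟨a1, a2, a3⟩ ⟨b1, b2, b3⟩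
    exact UpCycle.efficient hg ⟨gm_up (hA.1 _ _) (hw _) (hv _) a1 b1,
      gm_up (hA.1 _ _) (hw _) (hv _) a2 b2, gm_up (hA.1 _ _) (hw _) (hv _) a3 b3⟩
  rcases hweff.cycle hA hw with hW | hW <;> rcases hveff.cycle hA hv with hV | hV
  · exact up hW hV
  · exact up hW (hV.up hA hv (hW.prod_le hA hw))
  · exact up (hW.up hA hw (hV.prod_le hA hv)) hV
  · obtain ⟨a1, a2, a3⟩ := hW
    obtain ⟨b1, b2, b3⟩ := hV
    exact DownCycle.efficient hg ⟨gm_down (hA.1 _ _) (hw _) (hv _) (hv _) a1 b1,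
      gm_down (hA.1 _ _) (hw _) (hv _) (hv _) a2 b2,
      gm_down (hA.1 _ _) (hw _) (hv _) (hv _) a3 b3⟩
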